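/- Let f be 2π-periodic and, for a fixed x, let θ > 0 be such that f(x - θ·) is analytic on [-π, π], and let ρ be a C_0^∞(-π,π) localizer in the Gevrey class G_α with parameters (M, η) and with ρ(0) = 1. Then the function g_x(y) := f(x-θy)ρ(y) - f(x) belongs to G_α, and the regularization error of the spectral mollifier satisfies |(f ⋆ ψ_{p,θ})(x) - f(x)| = |(S_p g_x)(0) - g_x(0)| ≤ Const_ρ · p · e^{-α(ηp)^{1/α}}; in particular, for the localizer ρ_c one has |(f ⋆ ψ_{p,θ_c})(x) - f(x)| ≤ Const_c · p · e^{-2√(η_c p)}. -/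

import Mathlib

open MeasureTheory Real

noncomputable section

/-- Dirichlet kernel of degree `p`: `D_p(x) = (1/2π) ∑_{|k| ≤ p} e^{ikx}`. -/
def dirichletKer (p : ℕ) (x : ℝ) : ℝ :=
  (1 / (2 * π)) * ∑ k ∈ Finset.Icc (-(p : ℤ)) (p : ℤ), Real.cos (k * x)

/-- Fourier coefficient `f̂_k` of a 2π-periodic function. -/
def fourierCoefOn (f : ℝ → ℂ) (k : ℤ) : ℂ :=
  (1 / (2 * π)) * ∫ y in (-π)..π, f y * Complex.exp (-(Complex.I * k * y))

/-- `N`-th Fourier partial sum `S_N f`. -/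
def SN (N : ℕ) (f : ℝ → ℂ) (x : ℝ) : ℂ :=
  ∑ k ∈ Finset.Icc (-(N : ℤ)) (N : ℤ), fourierCoefOn f k * Complex.exp (Complex.I * k * x)

/-- The two-parameter spectral mollifier `ψ_{p,θ}(x) = (1/θ) ρ(x/θ) D_p(x/θ)`. -/
def specMollifier (ρ : ℝ → ℝ) (p : ℕ) (θ : ℝ) (x : ℝ) : ℝ :=
  (1 / θ) * ρ (x / θ) * dirichletKer p (x / θ)

/-- `‖g‖_{C^s}`: the sup norm of the `s`-th derivative of `g`. -/
def CsNorm (s : ℕ) (g : ℝ → ℝ) : ℝ := ⨆ x : ℝ, |iteratedDeriv s g x|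

/-!
Set `h y = F y * ρ y`, where `F y = f (x - θ * y)`; then `h 0 = f x` and the mollified value is
the Fourier partial sum `S_p h (0)`. The order `α` must exceed `1`, because a function in `G_1` that
vanishes on a half-line vanishes identically. The derivatives of the analytic factor `F` grow like
`s! / r ^ s`, which is negligible against `(s!) ^ α / η ^ s`, so `h` satisfies Gevrey bounds of
order `α` with the same `η` as `ρ`.

All derivatives of `h` vanish at `±π`, so `s` integrations by parts bound the Fourier coefficients
of `h` by `|k| ^ (-s)` times those of its `s`-th derivative. Cauchy–Schwarz and Parseval's identity
then give a tail of order `(s!) ^ α / (η * p) ^ s * √p`, and by Stirling's formula the choice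
`s ≈ (η * p) ^ (1 / α)` makes it exponentially small.
-/

section Gevrey

open Set Filter Topology
open scoped Nat ContDiff NNReal ENNReal

section Definition

variable {𝕜 E : Type*} [NontriviallyNormedField 𝕜] [NormedAddCommGroup E] [NormedSpace 𝕜 E]
  {α β M M' η η' : ℝ} {f : 𝕜 → E} {K L : Set 𝕜}

/-- The estimate defining the Gevrey class `G_α` with parameters `(M, η)`, on a set `K`. Unlike the
class in the paper it includes the order `s = 0`, so that it also bounds `f` itself. -/
def GevreyBoundOn (α M η : ℝ) (f : 𝕜 → E) (K : Set 𝕜) : Prop :=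
  ∀ s : ℕ, ∀ y ∈ K, ‖iteratedDeriv s f y‖ ≤ M * (s ! : ℝ) ^ α / η ^ s

namespace GevreyBoundOn

theorem norm_le (h : GevreyBoundOn α M η f K) {y : 𝕜} (hy : y ∈ K) : ‖f y‖ ≤ M := by
  simpa using h 0 y hy

theorem union (hK : GevreyBoundOn α M η f K) (hL : GevreyBoundOn α M η f L) :
    GevreyBoundOn α M η f (K ∪ L) :=
  fun s y hy => hy.elim (hK s y) (hL s y)

theorem mono_set (h : GevreyBoundOn α M η f L) (hKL : K ⊆ L) : GevreyBoundOn α M η f K :=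
  fun s y hy => h s y (hKL hy)

theorem mono (h : GevreyBoundOn α M η f K) (hα : α ≤ β) (hM : M ≤ M') (hη' : 0 < η')
    (hη : η' ≤ η) : GevreyBoundOn β M' η' f K := by
  intro s y hy
  have hM0 : 0 ≤ M := (norm_nonneg _).trans (h.norm_le hy)
  have hM0' : 0 ≤ M' := hM0.trans hM
  have hs : (1 : ℝ) ≤ s ! := mod_cast s.factorial_pos
  refine (h s y hy).trans ?_
  gcongr

end GevreyBoundOn

theorem eqOn_zero_iteratedDeriv {s : Set 𝕜} (hs : UniqueDiffOn 𝕜 s) (hf : EqOn f 0 s) (n : ℕ) :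
    EqOn (iteratedDeriv n f) 0 s := by
  induction n with
  | zero => simpa using hf
  | succ n ih =>
    intro y hy
    rw [iteratedDeriv_succ]
    by_cases hd : DifferentiableAt 𝕜 (iteratedDeriv n f) y
    · rw [← hd.derivWithin (hs y hy), derivWithin_congr ih (ih hy)]
      simp
    · exact deriv_zero_of_not_differentiableAt hd

end Definition

section Analytic

variable {𝕜 E F : Type*} [NontriviallyNormedField 𝕜] [NormedAddCommGroup E] [NormedSpace 𝕜 E]
  [NormedAddCommGroup F] [NormedSpace 𝕜 F]

theorem exists_nnnorm_changeOrigin_mul_pow_le (p : FormalMultilinearSeries 𝕜 E F) {r : ℝ≥0}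
    (hr : (r + r : ℝ≥0∞) < p.radius) :
    ∃ C : ℝ≥0, ∀ y : E, ‖y‖₊ ≤ r → ∀ k, ‖p.changeOrigin y k‖₊ * r ^ k ≤ C := by
  have hr' : (r : ℝ≥0∞) < p.radius := (le_add_right le_rfl).trans_lt hr
  have hbase := (NNReal.summable_sigma.1 (p.changeOriginSeries_summable_aux₁ hr)).2
  refine ⟨_, fun y hy k => le_trans ?_ (hbase.le_tsum k fun _ _ => zero_le)⟩
  have hy' : (‖y‖₊ : ℝ≥0∞) < p.radius := (ENNReal.coe_le_coe.2 hy).trans_lt hr'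
  simp only [NNReal.tsum_mul_right]
  gcongr
  refine (p.nnnorm_changeOrigin_le k hy').trans (Summable.tsum_le_tsum (fun s => ?_)
    (p.changeOriginSeries_summable_aux₂ hy' k) (p.changeOriginSeries_summable_aux₂ hr' k))
  gcongr

variable [CompleteSpace F] {f : 𝕜 → F}

theorem norm_iteratedDeriv_le_of_hasFPowerSeriesOnBall {p : FormalMultilinearSeries 𝕜 𝕜 F} {a : 𝕜}
    {r : ℝ≥0∞} (hf : HasFPowerSeriesOnBall f p a r) (j : ℕ) :
    ‖iteratedDeriv j f a‖ ≤ j ! * ‖p j‖ := by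
  rw [iteratedDeriv_eq_iteratedFDeriv, ← hf.factorial_smul 1 j]
  refine (norm_nsmul_le ..).trans ?_
  gcongr
  simpa only [norm_one, Finset.prod_const_one, mul_one] using (p j).le_opNorm fun _ => 1

theorem exists_gevreyBoundOn_one_of_analyticAt {a : 𝕜} (hf : AnalyticAt 𝕜 f a) :
    ∃ M η : ℝ, 0 < η ∧ ∃ U ∈ 𝓝 a, GevreyBoundOn 1 M η f U := by
  obtain ⟨p, R, hp⟩ := hf
  obtain ⟨q, hq0, hqR⟩ := ENNReal.lt_iff_exists_nnreal_btwn.1 hp.r_pos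
  obtain ⟨r, hr0, rfl⟩ : ∃ r : ℝ≥0, 0 < r ∧ r + r = q :=
    ⟨q / 2, half_pos (mod_cast hq0), add_halves q⟩
  rw [ENNReal.coe_add] at hqR
  obtain ⟨C, hC⟩ := exists_nnnorm_changeOrigin_mul_pow_le p (hqR.trans_le hp.r_le)
  refine ⟨C, r, hr0, _, Metric.closedBall_mem_nhds a hr0, fun j z hz => ?_⟩
  have hz' : ‖z - a‖₊ ≤ r := mod_cast mem_closedBall_iff_norm.1 hz
  have hpz : HasFPowerSeriesOnBall f (p.changeOrigin (z - a)) z (R - ‖z - a‖₊) := by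
    simpa using hp.changeOrigin (y := z - a)
      ((ENNReal.coe_le_coe.2 hz').trans_lt ((le_add_right le_rfl).trans_lt hqR))
  have hCj : ‖p.changeOrigin (z - a) j‖ ≤ C / (r : ℝ) ^ j := by
    rw [le_div_iff₀ (by positivity)]
    exact mod_cast hC _ hz' j
  calc ‖iteratedDeriv j f z‖ ≤ j ! * ‖p.changeOrigin (z - a) j‖ :=
        norm_iteratedDeriv_le_of_hasFPowerSeriesOnBall hpz j
    _ ≤ j ! * (C / (r : ℝ) ^ j) := by gcongr
    _ = C * (j ! : ℝ) ^ (1 : ℝ) / (r : ℝ) ^ j := by rw [Real.rpow_one]; ring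

theorem exists_gevreyBoundOn_one_of_analyticOnNhd {K : Set 𝕜} (hf : AnalyticOnNhd 𝕜 f K)
    (hK : IsCompact K) : ∃ M η : ℝ, 0 < η ∧ GevreyBoundOn 1 M η f K := by
  refine hK.induction_on (p := fun K => ∃ M η : ℝ, 0 < η ∧ GevreyBoundOn 1 M η f K) ?_ ?_ ?_ ?_
  · exact ⟨0, 1, one_pos, fun s y hy => hy.elim⟩
  · rintro s t hst ⟨M, η, hη, h⟩
    exact ⟨M, η, hη, h.mono_set hst⟩
  · rintro s t ⟨M, η, hη, hs⟩ ⟨M', η', hη', ht⟩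
    have hmin : 0 < min η η' := lt_min hη hη'
    exact ⟨max M M', min η η', hmin,
      (hs.mono le_rfl (le_max_left _ _) hmin (min_le_left _ _)).union
        (ht.mono le_rfl (le_max_right _ _) hmin (min_le_right _ _))⟩
  · intro y hy
    obtain ⟨M, η, hη, U, hU, h⟩ := exists_gevreyBoundOn_one_of_analyticAt (hf y hy)
    exact ⟨U, mem_nhdsWithin_of_mem_nhds hU, M, η, hη, h⟩

end Analytic

section RealVariable

variable {E : Type*} [NormedAddCommGroup E] [NormedSpace ℝ E] {α M η a b : ℝ} {f : ℝ → E}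

theorem norm_le_of_iteratedDeriv_eq_zero {n : ℕ} {C : ℝ} (hab : a ≤ b)
    (hf : ContDiff ℝ (n + 1) f) (hzero : ∀ k ≤ n, iteratedDeriv k f a = 0)
    (hC : ∀ z ∈ Icc a b, ‖iteratedDeriv (n + 1) f z‖ ≤ C) :
    ‖f b‖ ≤ C * (b - a) ^ (n + 1) / n ! := by
  rcases hab.eq_or_lt with rfl | hab'
  · simp [show f a = 0 by simpa using hzero 0 n.zero_le]
  have hwithin : ∀ k ≤ n + 1, EqOn (iteratedDerivWithin k f (Icc a b)) (iteratedDeriv k f)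
      (Icc a b) := fun k hk z hz =>
    iteratedDerivWithin_eq_iteratedDeriv (uniqueDiffOn_Icc hab')
      (hf.contDiffAt.of_le (mod_cast hk)) hz
  have htaylor : taylorWithinEval f n (Icc a b) a b = 0 := by
    rw [taylor_within_apply]
    refine Finset.sum_eq_zero fun k hk => ?_
    have hkn : k ≤ n := Finset.mem_range_succ_iff.1 hk
    rw [hwithin k (hkn.trans n.le_succ) (left_mem_Icc.2 hab), hzero k hkn, smul_zero]
  have hbound := taylor_mean_remainder_bound hab hf.contDiffOn (right_mem_Icc.2 hab)
    fun z hz => (hwithin (n + 1) le_rfl hz).symm ▸ hC z hz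
  rwa [htaylor, sub_zero] at hbound

namespace GevreyBoundOn

theorem eqOn_zero_Iic_add (h : GevreyBoundOn 1 M η f univ) (hη : 0 < η) (hf : ContDiff ℝ ∞ f)
    (ha : EqOn f 0 (Iic a)) : EqOn f 0 (Iic (a + η / 2)) := by
  intro y hy
  rcases le_total y a with hya | hay
  · exact ha hya
  have hM : 0 ≤ M := (norm_nonneg _).trans (h.norm_le (mem_univ a))
  have hbound (n : ℕ) : ‖f y‖ ≤ M * ((n + 1 : ℕ) * (1 / 2) ^ (n + 1)) := by
    have hstep : y - a ≤ η / 2 := by linarith [mem_Iic.1 hy]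
    calc ‖f y‖
        ≤ M * ((n + 1)! : ℝ) ^ (1 : ℝ) / η ^ (n + 1) * (y - a) ^ (n + 1) / n ! :=
          norm_le_of_iteratedDeriv_eq_zero hay (hf.of_le (mod_cast le_top))
            (fun k _ => eqOn_zero_iteratedDeriv (uniqueDiffOn_Iic a) ha k self_mem_Iic)
            fun z _ => h (n + 1) z (mem_univ z)
      _ ≤ M * ((n + 1)! : ℝ) ^ (1 : ℝ) / η ^ (n + 1) * (η / 2) ^ (n + 1) / n ! := by
          have := sub_nonneg.2 hay
          gcongr
      _ = M * ((n + 1 : ℕ) * (1 / 2) ^ (n + 1)) := by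
          rw [Real.rpow_one, Nat.factorial_succ, Nat.cast_mul, div_pow, div_pow, one_pow]
          field_simp
  have hlim : Tendsto (fun n : ℕ => M * ((n + 1 : ℕ) * (1 / 2 : ℝ) ^ (n + 1))) atTop (𝓝 0) := by
    have := (tendsto_self_mul_const_pow_of_lt_one (r := (1 / 2 : ℝ)) (by norm_num) (by norm_num))
    simpa using ((tendsto_add_atTop_iff_nat 1).2 this).const_mul M
  exact norm_le_zero_iff.1 (ge_of_tendsto' hlim hbound)

theorem eq_zero_of_eqOn_Iic (h : GevreyBoundOn 1 M η f univ) (hη : 0 < η) (hf : ContDiff ℝ ∞ f)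
    (ha : EqOn f 0 (Iic a)) : f = 0 := by
  have hsteps (n : ℕ) : EqOn f 0 (Iic (a + n * (η / 2))) := by
    induction n with
    | zero => simpa using ha
    | succ n ih => simpa [add_mul, add_assoc] using h.eqOn_zero_Iic_add hη hf ih
  ext y
  obtain ⟨n, hn⟩ := exists_nat_ge ((y - a) / (η / 2))
  rw [div_le_iff₀ (half_pos hη)] at hn
  exact hsteps n (by simp only [mem_Iic]; linarith)

theorem one_lt_order (h : GevreyBoundOn α M η f univ) (hη : 0 < η) (hf : ContDiff ℝ ∞ f)
    (ha : EqOn f 0 (Iic a)) (hne : f ≠ 0) : 1 < α := by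
  by_contra! hα
  exact hne ((h.mono hα le_rfl hη le_rfl).eq_zero_of_eqOn_Iic hη hf ha)

end GevreyBoundOn

end RealVariable

section Product

variable {𝕜 𝔸 : Type*} [NontriviallyNormedField 𝕜] [NormedRing 𝔸] [NormedAlgebra 𝕜 𝔸]
  {α A B r η : ℝ} {f g : 𝕜 → 𝔸} {K : Set 𝕜}

theorem summable_pow_div_factorial_rpow {q β : ℝ} (hq : 0 < q) (hβ : 0 < β) :
    Summable fun j : ℕ => q ^ j / (j ! : ℝ) ^ β := by
  have hpos (n : ℕ) : 0 < q ^ n / (n ! : ℝ) ^ β := by positivity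
  have hratio (n : ℕ) : ‖q ^ (n + 1) / ((n + 1)! : ℝ) ^ β‖ / ‖q ^ n / (n ! : ℝ) ^ β‖ =
      q * ((n + 1 : ℕ) ^ β : ℝ)⁻¹ := by
    rw [Real.norm_of_nonneg (hpos _).le, Real.norm_of_nonneg (hpos n).le, Nat.factorial_succ,
      Nat.cast_mul, Real.mul_rpow (Nat.cast_nonneg _) (Nat.cast_nonneg _), pow_succ]
    field_simp
  refine summable_of_ratio_test_tendsto_lt_one one_pos (.of_forall fun n => (hpos n).ne') ?_
  simp_rw [hratio]
  have hlim : Tendsto (fun n : ℕ => ((n : ℝ) ^ β)⁻¹) atTop (𝓝 0) :=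
    ((tendsto_rpow_atTop hβ).comp tendsto_natCast_atTop_atTop).inv_tendsto_atTop
  simpa using ((tendsto_add_atTop_iff_nat 1).2 hlim).const_mul q

theorem leibniz_term_le (hα : 1 ≤ α) (hA : 0 ≤ A) (hB : 0 ≤ B) (hr : 0 < r) (hη : 0 < η)
    {s j : ℕ} (hj : j ≤ s) :
    s.choose j * (A * (j ! : ℝ) ^ (1 : ℝ) / r ^ j) * (B * ((s - j)! : ℝ) ^ α / η ^ (s - j)) ≤
      A * B * (s ! : ℝ) ^ α / η ^ s * ((η / r) ^ j / (j ! : ℝ) ^ (α - 1)) := by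
  obtain ⟨m, rfl⟩ := Nat.exists_eq_add_of_le hj
  have hchoose : ((j + m).choose j : ℝ) * j ! * m ! = (j + m)! := by
    have := Nat.choose_mul_factorial_mul_factorial hj
    rw [Nat.add_sub_cancel_left] at this
    exact mod_cast this
  have hfactorial : (j ! : ℝ) ^ (α - 1) * (m ! : ℝ) ^ (α - 1) ≤ ((j + m)! : ℝ) ^ (α - 1) := by
    rw [← Real.mul_rpow (Nat.cast_nonneg _) (Nat.cast_nonneg _)]
    exact Real.rpow_le_rpow (by positivity)
      (mod_cast Nat.le_of_dvd (Nat.factorial_pos _) (j.factorial_mul_factorial_dvd_factorial_add m))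
      (sub_nonneg.2 hα)
  have hsplit (n : ℕ) : (n ! : ℝ) ^ α = n ! * (n ! : ℝ) ^ (α - 1) := by
    rw [Real.rpow_sub_one (by positivity)]
    field_simp
  calc (j + m).choose j * (A * (j ! : ℝ) ^ (1 : ℝ) / r ^ j) *
        (B * ((j + m - j)! : ℝ) ^ α / η ^ (j + m - j))
      = A * B * (j + m)! / (r ^ j * η ^ m) * (m ! : ℝ) ^ (α - 1) := by
        rw [Nat.add_sub_cancel_left, Real.rpow_one, hsplit m, ← hchoose]
        ring
    _ ≤ A * B * (j + m)! / (r ^ j * η ^ m) *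
        (((j + m)! : ℝ) ^ (α - 1) / (j ! : ℝ) ^ (α - 1)) := by
        gcongr
        rwa [le_div_iff₀' (by positivity)]
    _ = A * B * ((j + m)! : ℝ) ^ α / η ^ (j + m) * ((η / r) ^ j / (j ! : ℝ) ^ (α - 1)) := by
        rw [hsplit (j + m), pow_add, div_pow]
        field_simp

namespace GevreyBoundOn

-- Since `α > 1`, the binomial coefficient leaves a spare factor `(j!)^(1 - α)` in the `j`-th
-- Leibniz term; it beats `(η / r) ^ j`, so the product keeps the parameter `η` of `g`.
theorem mul (hα : 1 < α) (hr : 0 < r) (hη : 0 < η) (hf : GevreyBoundOn 1 A r f K)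
    (hg : GevreyBoundOn α B η g K) (hfs : ∀ y ∈ K, ContDiffAt 𝕜 ∞ f y)
    (hgs : ∀ y ∈ K, ContDiffAt 𝕜 ∞ g y) :
    GevreyBoundOn α (A * B * ∑' j : ℕ, (η / r) ^ j / (j ! : ℝ) ^ (α - 1)) η
      (fun y => f y * g y) K := by
  intro s y hy
  have hA : 0 ≤ A := (norm_nonneg _).trans (hf.norm_le hy)
  have hB : 0 ≤ B := (norm_nonneg _).trans (hg.norm_le hy)
  have hsum := summable_pow_div_factorial_rpow (div_pos hη hr) (sub_pos.2 hα)
  rw [iteratedDeriv_fun_mul ((hfs y hy).of_le (mod_cast le_top))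
    ((hgs y hy).of_le (mod_cast le_top))]
  calc ‖∑ j ∈ Finset.range (s + 1), s.choose j * iteratedDeriv j f y * iteratedDeriv (s - j) g y‖
      ≤ ∑ j ∈ Finset.range (s + 1), s.choose j * (A * (j ! : ℝ) ^ (1 : ℝ) / r ^ j) *
          (B * ((s - j)! : ℝ) ^ α / η ^ (s - j)) := by
        refine norm_sum_le_of_le _ fun j _ => (norm_mul_le _ _).trans ?_
        rw [← nsmul_eq_mul]
        gcongr
        · exact (norm_nsmul_le ..).trans (by gcongr; exact hf j y hy)
        · exact hg (s - j) y hy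
    _ ≤ ∑ j ∈ Finset.range (s + 1),
          A * B * (s ! : ℝ) ^ α / η ^ s * ((η / r) ^ j / (j ! : ℝ) ^ (α - 1)) :=
        Finset.sum_le_sum fun j hj =>
          leibniz_term_le hα.le hA hB hr hη (Finset.mem_range_succ_iff.1 hj)
    _ ≤ A * B * (s ! : ℝ) ^ α / η ^ s * ∑' j : ℕ, (η / r) ^ j / (j ! : ℝ) ^ (α - 1) := by
        rw [← Finset.mul_sum]
        gcongr
        exact hsum.sum_le_tsum _ fun j _ => by positivity
    _ = _ := by ring

theorem univ_of_eqOn_zero_compl (hf : GevreyBoundOn α A η f K) (hA : 0 ≤ A) (hη : 0 < η)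
    (hK : IsClosed K) (hzero : EqOn f 0 Kᶜ) : GevreyBoundOn α A η f univ := by
  intro s y _
  by_cases hy : y ∈ K
  · exact hf s y hy
  · rw [eqOn_zero_iteratedDeriv hK.isOpen_compl.uniqueDiffOn hzero s hy, Pi.zero_apply, norm_zero]
    positivity

theorem complex_ofReal {f : ℝ → ℝ} {K : Set ℝ} (hf : GevreyBoundOn α A η f K)
    (hfs : ContDiff ℝ ∞ f) : GevreyBoundOn α A η (fun y => (f y : ℂ)) K := by
  intro s y hy
  have hnorm := Complex.ofRealLI.norm_iteratedFDeriv_comp_left hfs.contDiffAt (x := y) (i := s)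
    (mod_cast le_top)
  simp only [norm_iteratedFDeriv_eq_norm_iteratedDeriv] at hnorm
  exact hnorm.trans_le (hf s y hy)

end GevreyBoundOn

theorem contDiff_mul_of_analyticOnNhd [CompleteSpace 𝔸] (hK : IsClosed K)
    (hf : AnalyticOnNhd 𝕜 f K) (hg : ContDiff 𝕜 ∞ g) (hzero : EqOn g 0 Kᶜ) :
    ContDiff 𝕜 ∞ fun y => f y * g y := by
  refine contDiff_iff_contDiffAt.2 fun y => ?_
  by_cases hy : y ∈ K
  · exact (hf y hy).contDiffAt.mul hg.contDiffAt
  · refine contDiffAt_const (c := 0) |>.congr_of_eventuallyEq ?_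
    filter_upwards [hK.isOpen_compl.mem_nhds hy] with z hz
    simp [hzero hz]

end Product
end Gevrey

section Fourier

open Set Filter Topology

section Interval

variable {a b B : ℝ} (hab : a < b) {f f' : ℝ → ℂ}

theorem norm_fourierCoeffOn_of_hasDerivAt {n : ℤ} (hn : n ≠ 0) (hend : f b = f a)
    (hf : ∀ x ∈ uIcc a b, HasDerivAt f (f' x) x) (hf' : IntervalIntegrable f' volume a b) :
    ‖fourierCoeffOn hab f n‖ = (b - a) / (2 * π * |(n : ℝ)|) * ‖fourierCoeffOn hab f' n‖ := by
  rw [fourierCoeffOn_of_hasDerivAt hab hn hf hf', hend, sub_self, mul_zero, zero_sub,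
    ← Complex.ofReal_sub]
  simp only [norm_mul, norm_neg, norm_div, norm_one, Complex.norm_real, Complex.norm_I,
    Complex.norm_ofNat, Complex.norm_intCast, Real.norm_of_nonneg pi_pos.le,
    Real.norm_of_nonneg (sub_nonneg.2 hab.le)]
  ring

theorem norm_fourierCoeffOn_eq_iteratedDeriv {n : ℤ} (hn : n ≠ 0) {s : ℕ} (hf : ContDiff ℝ s f)
    (hend : ∀ j < s, iteratedDeriv j f b = iteratedDeriv j f a) :
    ‖fourierCoeffOn hab f n‖ =
      ((b - a) / (2 * π * |(n : ℝ)|)) ^ s * ‖fourierCoeffOn hab (iteratedDeriv s f) n‖ := by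
  induction s with
  | zero => simp
  | succ s ih =>
    have hderiv (x : ℝ) : HasDerivAt (iteratedDeriv s f) (iteratedDeriv (s + 1) f x) x := by
      rw [iteratedDeriv_succ]
      exact (hf.differentiable_iteratedDeriv s (mod_cast s.lt_succ_self) x).hasDerivAt
    have hint : IntervalIntegrable (iteratedDeriv (s + 1) f) volume a b :=
      (hf.continuous_iteratedDeriv (s + 1) le_rfl).intervalIntegrable a b
    rw [ih (hf.of_le (mod_cast s.le_succ)) fun j hj => hend j (hj.trans s.lt_succ_self),
      norm_fourierCoeffOn_of_hasDerivAt hab hn (hend s s.lt_succ_self) (fun x _ => hderiv x) hint,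
      pow_succ, ← mul_assoc]

theorem sum_sq_norm_fourierCoeffOn_le
    (hf : AEStronglyMeasurable f (volume.restrict (Ioc a b))) (hB : ∀ y ∈ Ioc a b, ‖f y‖ ≤ B)
    (u : Finset ℤ) : ∑ k ∈ u, ‖fourierCoeffOn hab f k‖ ^ 2 ≤ B ^ 2 := by
  have hL2 : MemLp f 2 (volume.restrict (Ioc a b)) :=
    .of_bound hf B (ae_restrict_of_forall_mem measurableSet_Ioc hB)
  refine (sum_le_hasSum u (fun _ _ => by positivity) (hasSum_sq_fourierCoeffOn hab hL2)).trans ?_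
  have hint : ‖∫ y in a..b, ‖f y‖ ^ 2‖ ≤ B ^ 2 * |b - a| := by
    refine intervalIntegral.norm_integral_le_of_norm_le_const fun y hy => ?_
    rw [uIoc_of_le hab.le] at hy
    rw [norm_pow, norm_norm]
    exact pow_le_pow_left₀ (norm_nonneg _) (hB y hy) 2
  rw [smul_eq_mul, inv_mul_le_iff₀ (sub_pos.2 hab), mul_comm]
  rw [abs_of_pos (sub_pos.2 hab)] at hint
  exact (le_abs_self _).trans hint

theorem sum_natCast_inv_sq_le {p : ℕ} (hp : p ≠ 0) {v : Finset ℕ} (hv : ∀ n ∈ v, p < n) :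
    ∑ n ∈ v, ((n : ℝ) ^ 2)⁻¹ ≤ (p : ℝ)⁻¹ := by
  have hsub : v ⊆ Finset.Ioc p (p + v.sup id) := fun n hn =>
    Finset.mem_Ioc.2 ⟨hv n hn, (Finset.le_sup (f := id) hn).trans (Nat.le_add_left _ _)⟩
  calc ∑ n ∈ v, ((n : ℝ) ^ 2)⁻¹
      ≤ ∑ n ∈ Finset.Ioc p (p + v.sup id), ((n : ℝ) ^ 2)⁻¹ :=
        Finset.sum_le_sum_of_subset_of_nonneg hsub fun n _ _ => by positivity
    _ ≤ (p : ℝ)⁻¹ - ((p + v.sup id : ℕ) : ℝ)⁻¹ := sum_Ioc_inv_sq_le_sub hp (Nat.le_add_right _ _)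
    _ ≤ (p : ℝ)⁻¹ := sub_le_self _ (by positivity)

theorem sum_intCast_inv_sq_le {p : ℕ} (hp : p ≠ 0) {u : Finset ℤ} (hu : ∀ k ∈ u, (p : ℤ) < |k|) :
    ∑ k ∈ u, ((k : ℝ) ^ 2)⁻¹ ≤ 2 / p := by
  have hhalf {v : Finset ℤ} (hv : v ⊆ u) (hinj : InjOn Int.natAbs v) :
      ∑ k ∈ v, ((k : ℝ) ^ 2)⁻¹ ≤ (p : ℝ)⁻¹ := by
    have habs : ∑ k ∈ v, ((k : ℝ) ^ 2)⁻¹ = ∑ n ∈ v.image Int.natAbs, ((n : ℝ) ^ 2)⁻¹ := by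
      rw [Finset.sum_image hinj]
      simp only [Nat.cast_natAbs, Int.cast_abs, sq_abs]
    rw [habs]
    refine sum_natCast_inv_sq_le hp fun n hn => ?_
    obtain ⟨k, hk, rfl⟩ := Finset.mem_image.1 hn
    have hpk := hu k (hv hk)
    rwa [Int.abs_eq_natAbs, Nat.cast_lt] at hpk
  rw [← Finset.sum_filter_add_sum_filter_not u (0 ≤ ·), div_eq_mul_inv, two_mul]
  refine add_le_add (hhalf (Finset.filter_subset _ _) ?_) (hhalf (Finset.filter_subset _ _) ?_) <;>
  · intro k hk l hl hkl
    simp only [Finset.coe_filter, mem_ofPred_eq] at hk hl hkl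
    omega

theorem norm_fourierCoeffOn_le_of_lt_abs {m p : ℕ} (hp : p ≠ 0) (hf : ContDiff ℝ (m + 1 : ℕ) f)
    (hend : ∀ j < m + 1, iteratedDeriv j f b = iteratedDeriv j f a) {k : ℤ}
    (hk : (p : ℤ) < |k|) :
    ‖fourierCoeffOn hab f k‖ ≤ ((b - a) / (2 * π)) ^ (m + 1) / p ^ m *
      (|(k : ℝ)|⁻¹ * ‖fourierCoeffOn hab (iteratedDeriv (m + 1) f) k‖) := by
  have hL : 0 < b - a := sub_pos.2 hab
  have hpk : (p : ℝ) < |(k : ℝ)| := mod_cast hk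
  have hk0 : k ≠ 0 := abs_pos.1 (p.cast_nonneg.trans_lt hk)
  rw [norm_fourierCoeffOn_eq_iteratedDeriv hab hk0 hf hend]
  set c := ‖fourierCoeffOn hab (iteratedDeriv (m + 1) f) k‖
  calc ((b - a) / (2 * π * |(k : ℝ)|)) ^ (m + 1) * c
      = ((b - a) / (2 * π)) ^ (m + 1) / |(k : ℝ)| ^ m * (|(k : ℝ)|⁻¹ * c) := by
        rw [← div_div, div_pow _ |(k : ℝ)|, pow_succ |(k : ℝ)|]
        field_simp
    _ ≤ ((b - a) / (2 * π)) ^ (m + 1) / p ^ m * (|(k : ℝ)|⁻¹ * c) := by gcongr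

theorem sum_norm_fourierCoeffOn_le {s p : ℕ} (hs : s ≠ 0) (hp : p ≠ 0) (hf : ContDiff ℝ s f)
    (hend : ∀ j < s, iteratedDeriv j f b = iteratedDeriv j f a)
    (hB : ∀ y ∈ Ioc a b, ‖iteratedDeriv s f y‖ ≤ B) {u : Finset ℤ}
    (hu : ∀ k ∈ u, (p : ℤ) < |k|) :
    ∑ k ∈ u, ‖fourierCoeffOn hab f k‖ ≤ ((b - a) / (2 * π)) ^ s * B * (√(2 * p) / p ^ s) := by
  obtain ⟨m, rfl⟩ := Nat.exists_eq_succ_of_ne_zero hs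
  have hL : 0 < b - a := sub_pos.2 hab
  have hB0 : 0 ≤ B := (norm_nonneg _).trans (hB b (right_mem_Ioc.2 hab))
  set c : ℤ → ℝ := fun k => ‖fourierCoeffOn hab (iteratedDeriv (m + 1) f) k‖
  have hparseval : ∑ k ∈ u, c k ^ 2 ≤ B ^ 2 := sum_sq_norm_fourierCoeffOn_le hab
    (hf.continuous_iteratedDeriv _ le_rfl).aestronglyMeasurable hB u
  have hsqrt : √(2 / p) = √(2 * p) / p := by
    rw [show (2 / p : ℝ) = 2 * p / p ^ 2 by field_simp, Real.sqrt_div (by positivity),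
      Real.sqrt_sq p.cast_nonneg]
  calc ∑ k ∈ u, ‖fourierCoeffOn hab f k‖
      ≤ ((b - a) / (2 * π)) ^ (m + 1) / p ^ m * ∑ k ∈ u, |(k : ℝ)|⁻¹ * c k := by
        rw [Finset.mul_sum]
        exact Finset.sum_le_sum fun k hk =>
          norm_fourierCoeffOn_le_of_lt_abs hab hp hf hend (hu k hk)
    _ ≤ ((b - a) / (2 * π)) ^ (m + 1) / p ^ m *
          (√(∑ k ∈ u, |(k : ℝ)|⁻¹ ^ 2) * √(∑ k ∈ u, c k ^ 2)) := by
        gcongr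
        exact Real.sum_mul_le_sqrt_mul_sqrt _ _ _
    _ ≤ ((b - a) / (2 * π)) ^ (m + 1) / p ^ m * (√(2 / p) * √(B ^ 2)) := by
        simp only [inv_pow, sq_abs]
        gcongr
        exact sum_intCast_inv_sq_le hp hu
    _ = ((b - a) / (2 * π)) ^ (m + 1) * B * (√(2 * p) / p ^ (m + 1)) := by
        rw [hsqrt, Real.sqrt_sq hB0, pow_succ (p : ℝ)]
        field_simp

theorem summable_fourierCoeffOn_of_contDiff (hf : ContDiff ℝ 1 f) (hend : f b = f a) :
    Summable fun k => fourierCoeffOn hab f k := by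
  obtain ⟨B, hB⟩ := isCompact_Icc.exists_bound_of_continuousOn (s := Icc a b)
    (hf.continuous_iteratedDeriv 1 le_rfl).continuousOn
  have hfar (k : {k // k ∉ Finset.Icc (-1 : ℤ) 1}) : (1 : ℕ) < |(k : ℤ)| := by
    have := k.2
    simp only [Finset.mem_Icc, not_and_or, not_le] at this
    rw [lt_abs]
    omega
  refine .of_norm ((Finset.Icc (-1 : ℤ) 1).summable_compl_iff.1 (summable_of_sum_le
    (fun _ => norm_nonneg _) fun u => (u.sum_map (.subtype _) _).symm.trans_le
      (sum_norm_fourierCoeffOn_le hab one_ne_zero one_ne_zero hf (by simpa using hend)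
        (fun y hy => hB y (Ioc_subset_Icc_self hy)) ?_)))
  exact Finset.forall_mem_map.2 fun k _ => hfar k

theorem hasSum_fourierCoeffOn_mul_fourier (hf : ContinuousOn f (Icc a b)) (hend : f b = f a)
    (hsum : Summable fun k => fourierCoeffOn hab f k) {x : ℝ} (hx : x ∈ Ico a b) :
    HasSum (fun k => fourierCoeffOn hab f k * fourier k (x : AddCircle (b - a))) (f x) := by
  have : Fact (0 < b - a) := ⟨sub_pos.2 hab⟩
  have hb : a + (b - a) = b := add_sub_cancel a b
  let g : C(AddCircle (b - a), ℂ) :=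
    ⟨AddCircle.liftIco (b - a) a f, AddCircle.liftIco_continuous (by rw [hb, hend]) (by rwa [hb])⟩
  have hcoeff (k : ℤ) : fourierCoeff g k = fourierCoeffOn hab f k := by
    simpa only [hb, g, ContinuousMap.coe_mk] using
      fourierCoeff_liftIco_eq (T := b - a) (a := a) f k
  have hgx : g x = f x := AddCircle.liftIco_coe_apply (by rwa [hb])
  simp_rw [← hcoeff] at hsum ⊢
  exact hgx ▸ has_pointwise_sum_fourier_series_of_summable hsum x

theorem norm_sum_fourierCoeffOn_mul_fourier_sub_le {s p : ℕ} (hs : s ≠ 0) (hp : p ≠ 0)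
    (hf : ContDiff ℝ s f) (hend : ∀ j < s, iteratedDeriv j f b = iteratedDeriv j f a)
    (hB : ∀ y ∈ Ioc a b, ‖iteratedDeriv s f y‖ ≤ B) {x : ℝ} (hx : x ∈ Ico a b) :
    ‖∑ k ∈ Finset.Icc (-(p : ℤ)) p, fourierCoeffOn hab f k * fourier k (x : AddCircle (b - a)) -
        f x‖ ≤ ((b - a) / (2 * π)) ^ s * B * (√(2 * p) / p ^ s) := by
  have hend0 : f b = f a := by simpa using hend 0 (Nat.pos_of_ne_zero hs)
  have hsum := summable_fourierCoeffOn_of_contDiff hab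
    (hf.of_le (mod_cast Nat.one_le_iff_ne_zero.2 hs)) hend0
  have hlim := (hasSum_fourierCoeffOn_mul_fourier hab hf.continuous.continuousOn hend0 hsum
    hx).sub_const (∑ k ∈ Finset.Icc (-(p : ℤ)) p,
      fourierCoeffOn hab f k * fourier k (x : AddCircle (b - a)))
  rw [norm_sub_rev]
  refine le_of_tendsto hlim.norm ?_
  filter_upwards [eventually_ge_atTop (Finset.Icc (-(p : ℤ)) p)] with u hu
  rw [← Finset.sum_sdiff_eq_sub hu]
  refine (norm_sum_le _ _).trans ?_
  simp only [norm_mul, fourier_apply, Circle.norm_coe, mul_one]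
  refine sum_norm_fourierCoeffOn_le hab hs hp hf hend hB fun k hk => ?_
  simp only [Finset.mem_sdiff, Finset.mem_Icc, not_and_or, not_le] at hk
  rw [lt_abs]
  omega

end Interval

section Dirichlet

variable {h : ℝ → ℂ}

theorem dirichletKer_neg (p : ℕ) (y : ℝ) : dirichletKer p (-y) = dirichletKer p y := by
  simp only [dirichletKer, mul_neg, Real.cos_neg]

theorem ofReal_dirichletKer (p : ℕ) (y : ℝ) :
    (dirichletKer p y : ℂ) =
      1 / (2 * π) * ∑ k ∈ Finset.Icc (-(p : ℤ)) p, Complex.exp (Complex.I * k * y) := by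
  have hreflect : ∑ k ∈ Finset.Icc (-(p : ℤ)) p, Complex.exp (-(Complex.I * k * y)) =
      ∑ k ∈ Finset.Icc (-(p : ℤ)) p, Complex.exp (Complex.I * k * y) :=
    Finset.sum_nbij' (- ·) (- ·) (by simp [neg_le, and_comm]) (by simp [neg_le, and_comm])
      (by simp) (by simp) (by simp)
  have hcos (k : ℤ) : 2 * Complex.cos (k * y) =
      Complex.exp (Complex.I * k * y) + Complex.exp (-(Complex.I * k * y)) := by
    rw [Complex.two_cos]
    ring_nf
  have hsum : 2 * ∑ k ∈ Finset.Icc (-(p : ℤ)) p, Complex.cos (k * y) =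
      2 * ∑ k ∈ Finset.Icc (-(p : ℤ)) p, Complex.exp (Complex.I * k * y) := by
    rw [Finset.mul_sum, Finset.sum_congr rfl fun k _ => hcos k, Finset.sum_add_distrib, hreflect,
      two_mul]
  rw [dirichletKer]
  push_cast
  rw [mul_left_cancel₀ two_ne_zero hsum]

theorem fourierCoefOn_eq_fourierCoeffOn (hab : -π < π) (h : ℝ → ℂ) (k : ℤ) :
    fourierCoefOn h k = fourierCoeffOn hab h k := by
  have hchar (y : ℝ) : h y * Complex.exp (-(Complex.I * k * y)) =
      fourier (-k) (y : AddCircle (π - -π)) • h y := by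
    rw [fourier_coe_apply, smul_eq_mul, mul_comm]
    congr 2
    push_cast
    field_simp
    ring
  simp only [fourierCoefOn, fourierCoeffOn_eq_integral, hchar, Complex.real_smul]
  congr 1
  push_cast
  ring

theorem SN_eq_sum_fourierCoeffOn (hab : -π < π) (p : ℕ) (h : ℝ → ℂ) (x : ℝ) :
    SN p h x = ∑ k ∈ Finset.Icc (-(p : ℤ)) p,
      fourierCoeffOn hab h k * fourier k (x : AddCircle (π - -π)) := by
  refine Finset.sum_congr rfl fun k _ => ?_
  rw [fourierCoefOn_eq_fourierCoeffOn hab, fourier_coe_apply]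
  congr 2
  push_cast
  field_simp
  ring

theorem norm_SN_sub_le {B : ℝ} {s p : ℕ} (hs : s ≠ 0) (hp : p ≠ 0) (hh : ContDiff ℝ s h)
    (hend : ∀ j < s, iteratedDeriv j h π = iteratedDeriv j h (-π))
    (hB : ∀ y ∈ Ioc (-π) π, ‖iteratedDeriv s h y‖ ≤ B) {x : ℝ} (hx : x ∈ Ico (-π) π) :
    ‖SN p h x - h x‖ ≤ B * (√(2 * p) / p ^ s) := by
  have hab : -π < π := hx.1.trans_lt hx.2
  have hlen : (π - -π) / (2 * π) = 1 := by field_simp; ring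
  simpa only [SN_eq_sum_fourierCoeffOn hab, hlen, one_pow, one_mul] using
    norm_sum_fourierCoeffOn_mul_fourier_sub_le hab hs hp hh hend hB hx

theorem integral_mul_dirichletKer_sub (hh : IntervalIntegrable h volume (-π) π) (p : ℕ) (x : ℝ) :
    ∫ y in (-π)..π, h y * (dirichletKer p (x - y) : ℂ) = SN p h x := by
  have hexpand (y : ℝ) : h y * (dirichletKer p (x - y) : ℂ) =
      ∑ k ∈ Finset.Icc (-(p : ℤ)) p, 1 / (2 * π) * Complex.exp (Complex.I * k * x) *
        (h y * Complex.exp (-(Complex.I * k * y))) := by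
    rw [ofReal_dirichletKer, Finset.mul_sum, Finset.mul_sum]
    refine Finset.sum_congr rfl fun k _ => ?_
    rw [Complex.ofReal_sub, mul_sub, sub_eq_add_neg, Complex.exp_add]
    ring
  simp only [hexpand]
  rw [intervalIntegral.integral_finsetSum fun k _ =>
    (hh.mul_continuousOn (by fun_prop)).const_mul _]
  refine Finset.sum_congr rfl fun k _ => ?_
  rw [intervalIntegral.integral_const_mul, fourierCoefOn]
  ring

theorem integral_mul_dirichletKer (hh : IntervalIntegrable h volume (-π) π) (p : ℕ) :
    ∫ y in (-π)..π, h y * (dirichletKer p y : ℂ) = SN p h 0 := by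
  simpa only [zero_sub, dirichletKer_neg] using integral_mul_dirichletKer_sub hh p 0

end Dirichlet
end Fourier

section Optimization

open scoped Nat

theorem factorial_le_exp_one_mul_sqrt_mul_pow {n : ℕ} (hn : n ≠ 0) :
    (n ! : ℝ) ≤ exp 1 * √n * (n / exp 1) ^ n := by
  obtain ⟨m, rfl⟩ := Nat.exists_eq_succ_of_ne_zero hn
  have hanti : Stirling.stirlingSeq (m + 1) ≤ Stirling.stirlingSeq 1 :=
    Stirling.stirlingSeq'_antitone m.zero_le
  rw [Stirling.stirlingSeq_one, Stirling.stirlingSeq, div_le_iff₀ (by positivity),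
    Real.sqrt_mul zero_le_two] at hanti
  refine hanti.trans_eq ?_
  field_simp

theorem factorial_floor_div_pow_le {u : ℝ} (hu : 1 ≤ u) :
    (⌊u⌋₊ ! : ℝ) / u ^ ⌊u⌋₊ ≤ exp 2 * √u * exp (-u) := by
  set s := ⌊u⌋₊
  have hsu : (s : ℝ) ≤ u := Nat.floor_le (zero_le_one.trans hu)
  have hus : u - 1 < s := Nat.sub_one_lt_floor u
  have hs : s ≠ 0 := (Nat.floor_pos.2 hu).ne'
  rw [div_le_iff₀ (by positivity)]
  calc (s ! : ℝ) ≤ exp 1 * √s * (s / exp 1) ^ s := factorial_le_exp_one_mul_sqrt_mul_pow hs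
    _ = exp (1 - s) * √s * s ^ s := by
        rw [div_pow, exp_one_pow, exp_sub]
        ring
    _ ≤ exp (2 - u) * √u * u ^ s := by
        have hexp : exp (1 - s) ≤ exp (2 - u) := exp_le_exp.2 (by linarith)
        gcongr
    _ = exp 2 * √u * exp (-u) * u ^ s := by
        rw [sub_eq_add_neg, exp_add]
        ring

theorem exists_factorial_div_pow_le {u : ℝ} (hu : 0 < u) :
    ∃ s : ℕ, s ≠ 0 ∧ (s ! : ℝ) / u ^ s ≤ exp 2 * max √u u⁻¹ * exp (-u) := by
  rcases lt_or_ge u 1 with hu1 | hu1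
  · refine ⟨1, one_ne_zero, ?_⟩
    calc ((1 ! : ℕ) : ℝ) / u ^ 1 = 1 * u⁻¹ := by simp
      _ ≤ exp (2 - u) * max √u u⁻¹ := by
          gcongr
          · exact one_le_exp (by linarith)
          · exact le_max_right _ _
      _ = exp 2 * max √u u⁻¹ * exp (-u) := by
          rw [sub_eq_add_neg, exp_add]
          ring
  · refine ⟨⌊u⌋₊, (Nat.floor_pos.2 hu1).ne', (factorial_floor_div_pow_le hu1).trans ?_⟩
    gcongr
    exact le_max_left _ _

theorem max_sqrt_inv_rpow_le {α η u p : ℝ} (hη : 0 < η) (hp : 1 ≤ p) (hu : 0 < u)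
    (huα : u ^ α = η * p) : (max √u u⁻¹) ^ α ≤ max √η η⁻¹ * √p := by
  rcases max_choice √u u⁻¹ with hmax | hmax <;> rw [hmax]
  · calc √u ^ α = √(u ^ α) := by
          rw [Real.sqrt_eq_rpow, Real.sqrt_eq_rpow, ← Real.rpow_mul hu.le, ← Real.rpow_mul hu.le,
            mul_comm]
      _ = √η * √p := by rw [huα, Real.sqrt_mul hη.le]
      _ ≤ max √η η⁻¹ * √p := by
          gcongr
          exact le_max_left _ _
  · calc u⁻¹ ^ α = η⁻¹ * p⁻¹ := by rw [Real.inv_rpow hu.le, huα, mul_inv]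
      _ ≤ max √η η⁻¹ * √p := by
          gcongr
          · exact le_max_right _ _
          · exact (inv_le_one_of_one_le₀ hp).trans (Real.one_le_sqrt.2 hp)

-- Choosing `s ≈ u := (ηp)^(1/α)` turns `(s!)^α / (ηp)^s = (s! / u^s)^α` into `e^(-αu)`, up to
-- powers of `p`.
theorem exists_factorial_rpow_div_pow_mul_sqrt_le {α η : ℝ} (hα : 0 < α) (hη : 0 < η) {p : ℕ}
    (hp : p ≠ 0) :
    ∃ s : ℕ, s ≠ 0 ∧ (s ! : ℝ) ^ α / η ^ s * (√p / p ^ s) ≤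
      exp (2 * α) * max √η η⁻¹ * p * exp (-α * (η * p) ^ (1 / α)) := by
  have hp1 : (1 : ℝ) ≤ p := mod_cast Nat.one_le_iff_ne_zero.2 hp
  have hηp : 0 < η * p := by positivity
  set u : ℝ := (η * p) ^ (1 / α) with hu
  have hu0 : 0 < u := by positivity
  have huα : u ^ α = η * p := by rw [hu, one_div, Real.rpow_inv_rpow hηp.le hα.ne']
  obtain ⟨s, hs, hsu⟩ := exists_factorial_div_pow_le hu0
  refine ⟨s, hs, ?_⟩
  calc (s ! : ℝ) ^ α / η ^ s * (√p / p ^ s)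
      = ((s ! : ℝ) / u ^ s) ^ α * √p := by
        rw [Real.div_rpow (by positivity) (by positivity), ← Real.rpow_natCast_mul hu0.le,
          mul_comm (s : ℝ), Real.rpow_mul_natCast hu0.le, huα, mul_pow]
        ring
    _ ≤ (exp 2 * max √u u⁻¹ * exp (-u)) ^ α * √p := by gcongr
    _ = exp (2 * α) * (max √u u⁻¹) ^ α * exp (-α * u) * √p := by
        rw [Real.mul_rpow (by positivity) (by positivity), Real.mul_rpow (by positivity)
          (by positivity), ← exp_mul, ← exp_mul, neg_mul, neg_mul, mul_comm u]
    _ ≤ exp (2 * α) * (max √η η⁻¹ * √p) * exp (-α * u) * √p := by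
        gcongr
        exact max_sqrt_inv_rpow_le hη hp1 hu0 huα
    _ = exp (2 * α) * max √η η⁻¹ * (√p * √p) * exp (-α * u) := by ring
    _ = _ := by rw [Real.mul_self_sqrt (by positivity)]

end Optimization

section Mollifier

open Set
open scoped Nat ContDiff

namespace GevreyBoundOn

theorem exists_of_forall_one_le {E : Type*} [NormedAddCommGroup E] [NormedSpace ℝ E] {α M η a b : ℝ}
    {f : ℝ → E} (hf : Continuous f) (hsupp : ∀ y ∉ Ioo a b, f y = 0)
    (hgev : ∀ s : ℕ, 1 ≤ s → ∀ y, ‖iteratedDeriv s f y‖ ≤ M * (s ! : ℝ) ^ α / η ^ s)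
    (hη : 0 < η) : ∃ M', GevreyBoundOn α M' η f univ := by
  obtain ⟨C, hC⟩ := hf.bounded_above_of_compact_support
    (HasCompactSupport.intro (isCompact_Icc (a := a) (b := b)) fun y hy =>
      hsupp y fun hy' => hy (Ioo_subset_Icc_self hy'))
  refine ⟨max C M, fun s y _ => ?_⟩
  rcases s.eq_zero_or_pos with rfl | hs
  · simpa using Or.inl (hC y)
  · refine (hgev s hs y).trans ?_
    gcongr
    exact le_max_right _ _

theorem norm_iteratedDeriv_sub_const_le {E : Type*} [NormedAddCommGroup E] [NormedSpace ℝ E]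
    {α M η : ℝ} {f : ℝ → E} {K : Set ℝ} (h : GevreyBoundOn α M η f K) (c : E) {s : ℕ}
    (hs : 1 ≤ s) {y : ℝ} (hy : y ∈ K) :
    ‖iteratedDeriv s (fun z => f z - c) y‖ ≤ M * (s ! : ℝ) ^ α / η ^ s := by
  obtain ⟨n, rfl⟩ := Nat.exists_eq_add_of_le' hs
  have hderiv : deriv (fun z => f z - c) = deriv f := funext fun z => deriv_sub_const c
  rw [iteratedDeriv_succ', hderiv, ← iteratedDeriv_succ']
  exact h (n + 1) y hy

theorem exists_mul_of_analyticOnNhd {α M η : ℝ} {F : ℝ → ℂ} {ρ : ℝ → ℝ} {K : Set ℝ}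
    (hα : 1 < α) (hη : 0 < η) (hK : IsCompact K) (hF : AnalyticOnNhd ℝ F K)
    (hρ : ContDiff ℝ ∞ ρ) (hzero : EqOn ρ 0 Kᶜ) (h : GevreyBoundOn α M η ρ univ) :
    ∃ M' > 0, GevreyBoundOn α M' η (fun y => F y * (ρ y : ℂ)) univ := by
  obtain ⟨A, r, hr, hA⟩ := exists_gevreyBoundOn_one_of_analyticOnNhd hF hK
  have hmul := hA.mul hα hr hη ((h.mono_set (subset_univ K)).complex_ofReal hρ)
    (fun y hy => (hF y hy).contDiffAt)
    fun y _ => (Complex.ofRealCLM.contDiff.comp hρ).contDiffAt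
  refine ⟨_, lt_max_of_lt_left one_pos,
    (hmul.mono le_rfl (le_max_right 1 _) hη le_rfl).univ_of_eqOn_zero_compl ?_ hη hK.isClosed
      fun y hy => ?_⟩
  · positivity
  · simp [hzero hy]

theorem norm_integral_mul_dirichletKer_sub_le {α M η : ℝ} {h : ℝ → ℂ} {p : ℕ}
    (hgev : GevreyBoundOn α M η h univ) (hα : 0 < α) (hη : 0 < η) (hh : ContDiff ℝ ∞ h)
    (hsupp : ∀ y ∉ Ioo (-π) π, h y = 0) (hp : p ≠ 0) :
    ‖(∫ y in (-π)..π, h y * (dirichletKer p y : ℂ)) - h 0‖ ≤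
      M * √2 * exp (2 * α) * max √η η⁻¹ * p * exp (-α * (η * p) ^ (1 / α)) := by
  have hM : 0 ≤ M := (norm_nonneg _).trans (hgev.norm_le (mem_univ 0))
  have hleft : EqOn h 0 (Iic (-π)) := fun y hy => hsupp y fun hy' => hy'.1.not_ge hy
  have hright : EqOn h 0 (Ici π) := fun y hy => hsupp y fun hy' => hy'.2.not_ge hy
  have hend (j : ℕ) : iteratedDeriv j h π = iteratedDeriv j h (-π) := by
    rw [eqOn_zero_iteratedDeriv (uniqueDiffOn_Ici π) hright j self_mem_Ici,
      eqOn_zero_iteratedDeriv (uniqueDiffOn_Iic (-π)) hleft j self_mem_Iic]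
    rfl
  obtain ⟨s, hs, hsp⟩ := exists_factorial_rpow_div_pow_mul_sqrt_le hα hη hp
  rw [integral_mul_dirichletKer (hh.continuous.intervalIntegrable _ _)]
  calc ‖SN p h 0 - h 0‖ ≤ M * (s ! : ℝ) ^ α / η ^ s * (√(2 * p) / p ^ s) :=
        norm_SN_sub_le hs hp (hh.of_le (mod_cast le_top)) (fun j _ => hend j)
          (fun y _ => hgev s y (mem_univ y)) ⟨neg_nonpos.2 pi_pos.le, pi_pos⟩
    _ = M * √2 * ((s ! : ℝ) ^ α / η ^ s * (√p / p ^ s)) := by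
        rw [Real.sqrt_mul zero_le_two]
        ring
    _ ≤ M * √2 * (exp (2 * α) * max √η η⁻¹ * p * exp (-α * (η * p) ^ (1 / α))) := by gcongr
    _ = _ := by ring

end GevreyBoundOn

theorem gevrey_regularization_error_general {α M η : ℝ} {F : ℝ → ℂ} {ρ : ℝ → ℝ}
    (hana : AnalyticOnNhd ℝ F (Icc (-π) π)) (hρsm : ContDiff ℝ ∞ ρ)
    (hsupp : ∀ y ∉ Ioo (-π) π, ρ y = 0) (hρ0 : ρ 0 = 1) (hη : 0 < η)
    (hgev : ∀ s : ℕ, 1 ≤ s → ∀ y, |iteratedDeriv s ρ y| ≤ M * (s ! : ℝ) ^ α / η ^ s) :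
    (∃ M' : ℝ, 0 < M' ∧ ∀ s : ℕ, 1 ≤ s → ∀ y,
      ‖iteratedDeriv s (fun z => F z * (ρ z : ℂ) - F 0) y‖ ≤ M' * (s ! : ℝ) ^ α / η ^ s) ∧
    ∃ C : ℝ, 0 < C ∧ ∀ p : ℕ, 1 ≤ p →
      ‖(∫ y in (-π)..π, F y * ((ρ y * dirichletKer p y : ℝ) : ℂ)) - F 0‖ ≤
        C * p * exp (-α * (η * p) ^ (1 / α)) := by
  obtain ⟨M₁, hM₁⟩ := GevreyBoundOn.exists_of_forall_one_le hρsm.continuous hsupp hgev hη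
  have hα : 1 < α := hM₁.one_lt_order hη hρsm (a := -π)
    (fun y hy => hsupp y fun hy' => hy'.1.not_ge hy) fun h => by simp [h] at hρ0
  have hzero : EqOn ρ 0 (Icc (-π) π)ᶜ := fun y hy => hsupp y fun hy' => hy (Ioo_subset_Icc_self hy')
  obtain ⟨M', hM', hprod⟩ := hM₁.exists_mul_of_analyticOnNhd hα hη isCompact_Icc hana hρsm hzero
  refine ⟨⟨M', hM', fun s hs y => hprod.norm_iteratedDeriv_sub_const_le _ hs (mem_univ y)⟩,
    M' * √2 * exp (2 * α) * max √η η⁻¹, by positivity, fun p hp => ?_⟩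
  have herror := hprod.norm_integral_mul_dirichletKer_sub_le (p := p) (by positivity) hη
    (contDiff_mul_of_analyticOnNhd isClosed_Icc hana (Complex.ofRealCLM.contDiff.comp hρsm)
      fun y hy => by simp [hzero hy])
    (fun y hy => by simp [hsupp y hy]) (Nat.one_le_iff_ne_zero.1 hp)
  simpa only [Complex.ofReal_mul, mul_assoc, hρ0, Complex.ofReal_one, mul_one] using herror

end Mollifier

/-- If `f(x-θ·)` is analytic on `[-π,π]` and `ρ ∈ G_α ∩ C_0^∞(-π,π)`
with `ρ(0) = 1`, then `g_x(y) = f(x-θy)ρ(y) - f(x)` belongs to `G_α`, and the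
regularization error satisfies
`|(f ⋆ ψ_{p,θ})(x) - f(x)| ≤ Const_ρ · p · e^{-α(ηp)^{1/α}}`. -/
theorem gevrey_regularization_error
    (α : ℝ) (hα : 1 ≤ α) (f : ℝ → ℂ) (x θ : ℝ) (ρ : ℝ → ℝ) (M η : ℝ)
    (hper : Function.Periodic f (2 * π)) (hθ : 0 < θ)
    (hana : AnalyticOnNhd ℝ (fun y => f (x - θ * y)) (Set.Icc (-π) π))
    (hρsm : ContDiff ℝ (⊤ : ℕ∞) ρ)
    (hsupp : ∀ y, y ∉ Set.Ioo (-π) π → ρ y = 0)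
    (hρ0 : ρ 0 = 1) (hM : 0 < M) (hη : 0 < η)
    (hgev : ∀ s : ℕ, 1 ≤ s → ∀ y : ℝ,
      |iteratedDeriv s ρ y| ≤ M * (Nat.factorial s : ℝ) ^ α / η ^ s) :
    (∃ M' η' : ℝ, 0 < M' ∧ 0 < η' ∧
      ∀ s : ℕ, 1 ≤ s → ∀ y : ℝ,
        ‖iteratedDeriv s (fun z => f (x - θ * z) * ((ρ z : ℝ) : ℂ) - f x) y‖ ≤
          M' * (Nat.factorial s : ℝ) ^ α / η' ^ s) ∧
    ∃ Const : ℝ, 0 < Const ∧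
      ∀ p : ℕ, 1 ≤ p →
        ‖(∫ y in (-π)..π, f (x - θ * y) * ((ρ y * dirichletKer p y : ℝ) : ℂ)) - f x‖ ≤
          Const * p * Real.exp (-α * (η * p) ^ (1 / α)) := by
  obtain ⟨⟨M', hM', hderiv⟩, herror⟩ :=
    gevrey_regularization_error_general hana hρsm hsupp hρ0 hη hgev
  simp only [mul_zero, sub_zero] at hderiv herror
  exact ⟨⟨M', η, hM', hη, hderiv⟩, herror⟩
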